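/- Let n ≥ 1, μ, ν ∈ ℝ, 1 ≤ p, q ≤ ∞ and 0 < r, r₀ ≤ ∞. Assume μ ≥ ν, 0 ≤ ν/n + 1/q ≤ μ/n + 1/p ≤ 1, with r₀ = ∞ if μ/n + 1/p = 0 and r = ∞ if ν/n + 1/q = 0. Assume in addition that one of the following holds: (1) μ > ν, p, q < ∞, r₀ = ∞ and ν/n + 1/q < μ/n + 1/p < 1; (2) p, q < ∞, r₀ ≤ r and μ/n + 1/p < 1; (3) r₀ ≤ min(1, r). Then there exists a constant C, independent of t and f, such that for every t > 0 and every measurable f on ℝⁿ, ‖e^{tΔ}f‖_{K̇^ν_{q,r}} ≤ C·t^{−(n/2)[(μ/n + 1/p) − (ν/n + 1/q)]}·‖f‖_{K̇^μ_{p,r₀}}. -/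

import Mathlib

open MeasureTheory Set ENNReal Filter

noncomputable section

abbrev Euc (n : ℕ) : Type := EuclideanSpace ℝ (Fin n)

def annulus (n : ℕ) (j : ℤ) : Set (Euc n) :=
  {x : Euc n | (2 : ℝ) ^ (j - 1) ≤ ‖x‖ ∧ ‖x‖ < (2 : ℝ) ^ j}

def herzNorm (n : ℕ) (s : ℝ) (q r : ℝ≥0∞) (f : Euc n → ℝ) : ℝ≥0∞ :=
  if r = ⊤ then
    ⨆ j : ℤ, ENNReal.ofReal ((2 : ℝ) ^ ((j : ℝ) * s)) *
      eLpNorm ((annulus n j).indicator f) q volume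
  else
    (∑' j : ℤ, (ENNReal.ofReal ((2 : ℝ) ^ ((j : ℝ) * s)) *
      eLpNorm ((annulus n j).indicator f) q volume) ^ r.toReal) ^ (1 / r.toReal)

def heatKernel (n : ℕ) (t : ℝ) (x y : Euc n) : ℝ :=
  (4 * Real.pi * t) ^ (-(n : ℝ) / 2) * Real.exp (-‖x - y‖ ^ 2 / (4 * t))

def heatSemigroup (n : ℕ) (t : ℝ) (f : Euc n → ℝ) (x : Euc n) : ℝ :=
  ∫ y, heatKernel n t x y * f y

/-! ### Sequence space lemmas -/

lemma seq_eLpNorm_of_ne_top (a : ℤ → ℝ≥0∞) {r : ℝ≥0∞} (h0 : r ≠ 0) (ht : r ≠ ⊤) :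
    eLpNorm a r (Measure.count : Measure ℤ) = (∑' j, a j ^ r.toReal) ^ (1 / r.toReal) := by
  rw [eLpNorm_eq_lintegral_rpow_enorm_toReal h0 ht, lintegral_count]
  simp

lemma seq_eLpNorm_top (a : ℤ → ℝ≥0∞) :
    eLpNorm a ⊤ (Measure.count : Measure ℤ) = ⨆ j, a j := by
  rw [eLpNorm_exponent_top, eLpNormEssSup, essSup_count]
  simp

lemma two_ofReal_rpow (x : ℝ) : ENNReal.ofReal ((2 : ℝ) ^ x) = (2 : ℝ≥0∞) ^ x := by
  rw [← ENNReal.ofReal_rpow_of_pos (by norm_num)]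
  norm_num

lemma herzNorm_eq (n : ℕ) (s : ℝ) (q r : ℝ≥0∞) (hr : r ≠ 0) (f : Euc n → ℝ) :
    herzNorm n s q r f = eLpNorm (fun j : ℤ => (2 : ℝ≥0∞) ^ ((j : ℝ) * s) *
      eLpNorm ((annulus n j).indicator f) q volume) r (Measure.count : Measure ℤ) := by
  unfold herzNorm
  split_ifs with h
  · subst h
    rw [seq_eLpNorm_top]
    simp only [two_ofReal_rpow]
  · rw [seq_eLpNorm_of_ne_top _ hr h]
    simp only [two_ofReal_rpow]

lemma seq_le_eLpNorm (a : ℤ → ℝ≥0∞) {r : ℝ≥0∞} (h0 : r ≠ 0) (k : ℤ) :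
    a k ≤ eLpNorm a r (Measure.count : Measure ℤ) := by
  by_cases h : r = ⊤
  · subst h
    rw [seq_eLpNorm_top]
    exact le_iSup a k
  · rw [seq_eLpNorm_of_ne_top _ h0 h]
    have hr : 0 < r.toReal := ENNReal.toReal_pos h0 h
    calc a k = (a k ^ r.toReal) ^ (1 / r.toReal) := by
          rw [← ENNReal.rpow_mul, mul_one_div_cancel hr.ne', ENNReal.rpow_one]
      _ ≤ _ := by
          gcongr
          exact ENNReal.le_tsum k

lemma seq_eLpNorm_anti (a : ℤ → ℝ≥0∞) {r r₀ : ℝ≥0∞} (h0 : r₀ ≠ 0) (h : r₀ ≤ r) :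
    eLpNorm a r (Measure.count : Measure ℤ) ≤ eLpNorm a r₀ (Measure.count : Measure ℤ) := by
  by_cases ht : r = ⊤
  · subst ht
    rw [seq_eLpNorm_top]
    exact iSup_le fun k => seq_le_eLpNorm a h0 k
  have ht0 : r₀ ≠ ⊤ := ne_top_of_le_ne_top ht h
  have hr0 : r ≠ 0 := fun h' => h0 (by simpa [h'] using h)
  have hr₀p : 0 < r₀.toReal := ENNReal.toReal_pos h0 ht0
  have hrp : 0 < r.toReal := ENNReal.toReal_pos hr0 ht
  have hle : r₀.toReal ≤ r.toReal := ENNReal.toReal_mono ht h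
  set N := eLpNorm a r₀ (Measure.count : Measure ℤ) with hN
  have hNs : ∑' j, a j ^ r₀.toReal = N ^ r₀.toReal := by
    rw [hN, seq_eLpNorm_of_ne_top _ h0 ht0, ← ENNReal.rpow_mul,
      one_div_mul_cancel hr₀p.ne', ENNReal.rpow_one]
  rw [seq_eLpNorm_of_ne_top _ hr0 ht]
  calc (∑' j, a j ^ r.toReal) ^ (1 / r.toReal)
      ≤ (∑' j, a j ^ r₀.toReal * N ^ (r.toReal - r₀.toReal)) ^ (1 / r.toReal) := by
        gcongr with j
        calc a j ^ r.toReal = a j ^ (r₀.toReal + (r.toReal - r₀.toReal)) := by congr 1; ring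
          _ = a j ^ r₀.toReal * a j ^ (r.toReal - r₀.toReal) :=
              ENNReal.rpow_add_of_nonneg _ _ hr₀p.le (by linarith)
          _ ≤ _ := by
              gcongr
              exact seq_le_eLpNorm a h0 j
    _ = (N ^ r.toReal) ^ (1 / r.toReal) := by
        rw [ENNReal.tsum_mul_right, hNs, ← ENNReal.rpow_add_of_nonneg _ _ hr₀p.le (by linarith)]
        congr 2; ring
    _ = N := by rw [← ENNReal.rpow_mul, mul_one_div_cancel hrp.ne', ENNReal.rpow_one]

lemma seq_eLpNorm_shift (a : ℤ → ℝ≥0∞) {r : ℝ≥0∞} (h0 : r ≠ 0) (d : ℤ) :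
    eLpNorm (fun j => a (j + d)) r (Measure.count : Measure ℤ)
      = eLpNorm a r (Measure.count : Measure ℤ) := by
  by_cases h : r = ⊤
  · subst h
    rw [seq_eLpNorm_top, seq_eLpNorm_top]
    exact (Equiv.addRight d).iSup_comp (g := a)
  · rw [seq_eLpNorm_of_ne_top _ h0 h, seq_eLpNorm_of_ne_top _ h0 h]
    congr 1
    exact (Equiv.addRight d).tsum_eq (fun j => a j ^ r.toReal)

lemma seq_eLpNorm_const_mul (c : ℝ≥0∞) (a : ℤ → ℝ≥0∞) {r : ℝ≥0∞} (h0 : r ≠ 0) :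
    eLpNorm (fun j => c * a j) r (Measure.count : Measure ℤ)
      = c * eLpNorm a r (Measure.count : Measure ℤ) := by
  by_cases h : r = ⊤
  · subst h
    rw [seq_eLpNorm_top, seq_eLpNorm_top, ENNReal.mul_iSup]
  · have hr : 0 < r.toReal := ENNReal.toReal_pos h0 h
    rw [seq_eLpNorm_of_ne_top _ h0 h, seq_eLpNorm_of_ne_top _ h0 h]
    simp_rw [ENNReal.mul_rpow_of_nonneg _ _ hr.le]
    rw [ENNReal.tsum_mul_left, ENNReal.mul_rpow_of_nonneg _ _ (by positivity), ← ENNReal.rpow_mul,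
      mul_one_div_cancel hr.ne', ENNReal.rpow_one]

lemma seq_eLpNorm_mono {a b : ℤ → ℝ≥0∞} (h : ∀ j, a j ≤ b j) (r : ℝ≥0∞) :
    eLpNorm a r (Measure.count : Measure ℤ) ≤ eLpNorm b r (Measure.count : Measure ℤ) :=
  eLpNorm_mono_enorm (by simpa using h)

lemma seq_eLpNorm_add (a b : ℤ → ℝ≥0∞) (r : ℝ≥0∞) :
    eLpNorm (fun j => a j + b j) r (Measure.count : Measure ℤ)
      ≤ LpAddConst r * (eLpNorm a r (Measure.count : Measure ℤ)
          + eLpNorm b r (Measure.count : Measure ℤ)) :=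
  eLpNorm_add_le' (f := a) (g := b) (Measurable.of_discrete.aestronglyMeasurable)
    (Measurable.of_discrete.aestronglyMeasurable) r

lemma two_rpow_ne_top (x : ℝ) : (2 : ℝ≥0∞) ^ x ≠ ⊤ :=
  ENNReal.rpow_ne_top_of_ne_zero (by norm_num) (by norm_num)

lemma two_rpow_ne_zero (x : ℝ) : (2 : ℝ≥0∞) ^ x ≠ 0 := by
  simp

lemma two_rpow_mono {x y : ℝ} (h : x ≤ y) : (2 : ℝ≥0∞) ^ x ≤ (2 : ℝ≥0∞) ^ y :=
  ENNReal.rpow_le_rpow_of_exponent_le (by norm_num) h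

lemma two_rpow_add (x y : ℝ) : (2 : ℝ≥0∞) ^ (x + y) = (2 : ℝ≥0∞) ^ x * (2 : ℝ≥0∞) ^ y :=
  ENNReal.rpow_add _ _ (by norm_num) (by norm_num)

lemma tsum_geom_abs {c : ℝ} (hc : 0 < c) : ∑' i : ℤ, (2 : ℝ≥0∞) ^ (-c * |(i : ℝ)|) ≠ ⊤ := by
  have hnat : ∑' i : ℕ, (2 : ℝ≥0∞) ^ (-c * (i : ℝ)) ≠ ⊤ := by
    simp_rw [ENNReal.rpow_mul, ENNReal.rpow_natCast]
    rw [ENNReal.tsum_geometric]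
    apply ENNReal.inv_ne_top.2
    have : (2 : ℝ≥0∞) ^ (-c) < 1 :=
      ENNReal.rpow_lt_one_of_one_lt_of_neg (by norm_num) (by linarith)
    exact (tsub_pos_of_lt this).ne'
  have h := tsum_of_add_one_of_neg_add_one (f := fun i : ℤ => (2 : ℝ≥0∞) ^ (-c * |(i : ℝ)|)) ENNReal.summable ENNReal.summable
  rw [h]
  have h1 : ∑' i : ℕ, (2 : ℝ≥0∞) ^ (-c * |(((i : ℤ) + 1 : ℤ) : ℝ)|) ≠ ⊤ := by
    refine ne_top_of_le_ne_top hnat (ENNReal.tsum_le_tsum fun i => two_rpow_mono ?_)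
    push_cast
    rw [abs_of_nonneg (by positivity)]
    nlinarith
  have h2 : ∑' i : ℕ, (2 : ℝ≥0∞) ^ (-c * |((-((i : ℤ) + 1) : ℤ) : ℝ)|) ≠ ⊤ := by
    refine ne_top_of_le_ne_top hnat (ENNReal.tsum_le_tsum fun i => two_rpow_mono ?_)
    push_cast
    rw [abs_neg, abs_of_nonneg (by positivity)]
    nlinarith
  simp only [ne_eq, ENNReal.add_eq_top, not_or]
  exact ⟨⟨h1, two_rpow_ne_top _⟩, h2⟩

lemma seq_geom_ne_top {c : ℝ} (hc : 0 < c) {r : ℝ≥0∞} (h0 : r ≠ 0) :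
    eLpNorm (fun i : ℤ => (2 : ℝ≥0∞) ^ (-c * |(i : ℝ)|)) r (Measure.count : Measure ℤ) ≠ ⊤ := by
  by_cases h : r = ⊤
  · subst h
    refine ne_top_of_le_ne_top ?_ (seq_eLpNorm_anti _ one_ne_zero le_top)
    rw [seq_eLpNorm_of_ne_top _ one_ne_zero ENNReal.one_ne_top]
    simpa using tsum_geom_abs hc
  · have hr : 0 < r.toReal := ENNReal.toReal_pos h0 h
    rw [seq_eLpNorm_of_ne_top _ h0 h]
    apply ENNReal.rpow_ne_top_of_nonneg (by positivity)
    simp_rw [← ENNReal.rpow_mul]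
    have := tsum_geom_abs (c := c * r.toReal) (by positivity)
    convert this using 4
    ring

/-- the weight `2^(-L i₊ + θ i)` -/
def wt (L θ : ℝ) (i : ℤ) : ℝ≥0∞ := (2 : ℝ≥0∞) ^ (-L * max (i : ℝ) 0 + θ * i)

lemma wt_le_one {L θ : ℝ} (h0 : 0 ≤ θ) (hL : θ ≤ L) (i : ℤ) : wt L θ i ≤ 1 := by
  rw [← ENNReal.rpow_zero (x := 2)]
  apply two_rpow_mono
  rcases le_total (i : ℝ) 0 with h | h
  · rw [max_eq_right h]; nlinarith
  · rw [max_eq_left h]; nlinarith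

lemma wt_ne_top {L θ : ℝ} (h0 : 0 < θ) (hL : θ < L) {r : ℝ≥0∞} (hr : r ≠ 0) :
    eLpNorm (wt L θ) r (Measure.count : Measure ℤ) ≠ ⊤ := by
  have hc : 0 < min θ (L - θ) := lt_min h0 (by linarith)
  refine ne_top_of_le_ne_top (seq_geom_ne_top hc hr) (seq_eLpNorm_mono (fun i => ?_) r)
  apply two_rpow_mono
  have h1 := min_le_left θ (L - θ)
  have h2 := min_le_right θ (L - θ)
  rcases le_total (i : ℝ) 0 with h | h
  · rw [max_eq_right h, abs_of_nonpos h]; nlinarith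
  · rw [max_eq_left h, abs_of_nonneg h]; nlinarith

lemma wt_ne_top' {L θ : ℝ} (h0 : 0 ≤ θ) (hL : θ < L) {r : ℝ≥0∞} (hr : r ≠ 0)
    (h : θ = 0 → r = ⊤) :
    eLpNorm (wt L θ) r (Measure.count : Measure ℤ) ≠ ⊤ := by
  rcases h0.eq_or_lt with h' | h'
  · rw [h h'.symm, seq_eLpNorm_top]
    exact ne_top_of_le_ne_top ENNReal.one_ne_top (iSup_le fun i => wt_le_one h0 hL.le i)
  · exact wt_ne_top h' hL hr

/-- Bound of the weighted `ℓ¹` sum by the `ℓ^{r₀}` norm. -/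
lemma sum_wt_le {L θ : ℝ} (h0 : 0 ≤ θ) (hL : θ < L) {r₀ : ℝ≥0∞} (hr : r₀ ≠ 0)
    (h : 0 < θ ∨ r₀ ≤ 1) : ∃ K : ℝ≥0∞, K ≠ ⊤ ∧ ∀ (m : ℤ) (a : ℤ → ℝ≥0∞),
      ∑' k, wt L θ (k - m) * a k ≤ K * eLpNorm a r₀ (Measure.count : Measure ℤ) := by
  rcases h with h | h
  · refine ⟨eLpNorm (wt L θ) 1 (Measure.count : Measure ℤ), wt_ne_top h hL one_ne_zero,
      fun m a => ?_⟩
    calc ∑' k, wt L θ (k - m) * a k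
        ≤ ∑' k, wt L θ (k - m) * eLpNorm a r₀ (Measure.count : Measure ℤ) := by
          gcongr with k
          exact seq_le_eLpNorm a hr k
      _ = _ := by
          rw [ENNReal.tsum_mul_right, ← seq_eLpNorm_shift _ one_ne_zero (-m),
            seq_eLpNorm_of_ne_top _ one_ne_zero ENNReal.one_ne_top]
          simp [sub_eq_add_neg]
  · refine ⟨1, ENNReal.one_ne_top, fun m a => ?_⟩
    rw [one_mul]
    refine le_trans ?_ (seq_eLpNorm_anti a hr h)
    rw [seq_eLpNorm_of_ne_top _ one_ne_zero ENNReal.one_ne_top]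
    simp only [ENNReal.toReal_one, ENNReal.rpow_one, div_one]
    gcongr with k
    exact mul_le_of_le_one_left' (wt_le_one h0 hL.le _)

/-! ### Kernel lemmas -/

lemma heatKernel_nonneg (n : ℕ) {t : ℝ} (ht : 0 < t) (x y : Euc n) : 0 ≤ heatKernel n t x y := by
  unfold heatKernel
  positivity

lemma heatKernel_comm (n : ℕ) (t : ℝ) (x y : Euc n) : heatKernel n t x y = heatKernel n t y x := by
  unfold heatKernel
  rw [norm_sub_rev]

lemma measurable_heatKernel (n : ℕ) (t : ℝ) :
    Measurable (fun z : Euc n × Euc n => ENNReal.ofReal (heatKernel n t z.1 z.2)) := by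
  have h : Continuous (fun z : Euc n × Euc n => heatKernel n t z.1 z.2) := by
    unfold heatKernel
    fun_prop
  exact ENNReal.measurable_ofReal.comp h.measurable

lemma measurable_heatKernel_right (n : ℕ) (t : ℝ) (x : Euc n) :
    Measurable (fun y : Euc n => ENNReal.ofReal (heatKernel n t x y)) := by
  have h : Continuous (fun y : Euc n => heatKernel n t x y) := by
    unfold heatKernel
    fun_prop
  exact ENNReal.measurable_ofReal.comp h.measurable

lemma lintegral_heatKernel (n : ℕ) {t : ℝ} (ht : 0 < t) (x : Euc n) :
    ∫⁻ y, ENNReal.ofReal (heatKernel n t x y) = 1 := by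
  have hb : 0 < 1 / (4 * t) := by positivity
  have h1 := GaussianFourier.integral_rexp_neg_mul_sq_norm (V := Euc n) hb
  have hI : ∫ y, heatKernel n t x y = 1 := by
    unfold heatKernel
    rw [integral_const_mul]
    have : ∀ y : Euc n, Real.exp (-‖x - y‖ ^ 2 / (4 * t))
        = (fun v : Euc n => Real.exp (-(1 / (4 * t)) * ‖v‖ ^ 2)) (x - y) := by
      intro y
      simp only
      congr 1
      ring
    simp_rw [this]
    rw [integral_sub_left_eq_self (fun v : Euc n => Real.exp (-(1 / (4 * t)) * ‖v‖ ^ 2)), h1]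
    have h2 : Real.pi / (1 / (4 * t)) = 4 * Real.pi * t := by field_simp
    rw [h2, finrank_euclideanSpace_fin, ← Real.rpow_add (by positivity)]
    have : -(n : ℝ) / 2 + n / 2 = 0 := by ring
    rw [this, Real.rpow_zero]
  have hInt : Integrable (fun y => heatKernel n t x y) := by
    by_contra h
    rw [integral_undef h] at hI
    exact zero_ne_one hI
  rw [← ofReal_integral_eq_lintegral_ofReal hInt
    (Eventually.of_forall fun y => heatKernel_nonneg n ht x y), hI, ENNReal.ofReal_one]

lemma prefactor_le (n : ℕ) {t : ℝ} (ht : 0 < t) (m : ℤ) (hm : (2 : ℝ) ^ m ≤ √t) :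
    (4 * Real.pi * t) ^ (-(n : ℝ) / 2) ≤ (2 : ℝ) ^ (-(m : ℝ) * n) := by
  have h2 : (0 : ℝ) < (2 : ℝ) ^ (m : ℝ) := by positivity
  have h1 : ((2 : ℝ) ^ (m : ℝ)) ^ (2 : ℝ) ≤ 4 * Real.pi * t := by
    rw [Real.rpow_intCast]
    have h3 : ((2 : ℝ) ^ m) ^ 2 ≤ t := by
      calc ((2 : ℝ) ^ m) ^ 2 ≤ (√t) ^ 2 := by gcongr
        _ = t := Real.sq_sqrt ht.le
    have h4 := Real.pi_gt_three
    rw [Real.rpow_two]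
    nlinarith
  calc (4 * Real.pi * t) ^ (-(n : ℝ) / 2) ≤ (((2 : ℝ) ^ (m : ℝ)) ^ (2 : ℝ)) ^ (-(n : ℝ) / 2) := by
        apply Real.rpow_le_rpow_of_nonpos (by positivity) h1
        have : (0 : ℝ) ≤ n := by positivity
        linarith
    _ = (2 : ℝ) ^ (-(m : ℝ) * n) := by
        rw [← Real.rpow_mul (by positivity), ← Real.rpow_mul (by positivity)]
        congr 1
        ring

lemma heatKernel_le (n : ℕ) {t : ℝ} (ht : 0 < t) (m : ℤ) (hm : (2 : ℝ) ^ m ≤ √t) (x y : Euc n) :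
    ENNReal.ofReal (heatKernel n t x y) ≤ (2 : ℝ≥0∞) ^ (-(m : ℝ) * n) := by
  rw [← two_ofReal_rpow]
  apply ENNReal.ofReal_le_ofReal
  unfold heatKernel
  calc _ ≤ (2 : ℝ) ^ (-(m : ℝ) * n) * 1 := by
        gcongr
        · exact prefactor_le n ht m hm
        · apply Real.exp_le_one_iff.2
          apply div_nonpos_of_nonpos_of_nonneg <;> nlinarith [sq_nonneg ‖x - y‖]
    _ = _ := mul_one _

lemma exp_neg_le_aux (L : ℕ) {u s : ℝ} (hu : (2 : ℝ) ^ s ≤ u) :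
    Real.exp (-u) ≤ L.factorial * (2 : ℝ) ^ (-s * L) := by
  have hs : (0 : ℝ) < (2 : ℝ) ^ s := by positivity
  have h1 := Real.pow_div_factorial_le_exp ((2 : ℝ) ^ s) hs.le L
  have hf : (0 : ℝ) < L.factorial := by positivity
  calc Real.exp (-u) ≤ Real.exp (-(2 : ℝ) ^ s) := by gcongr
    _ = (Real.exp ((2 : ℝ) ^ s))⁻¹ := Real.exp_neg _
    _ ≤ (((2 : ℝ) ^ s) ^ L / L.factorial)⁻¹ := by gcongr
    _ = _ := by
        rw [inv_div, neg_mul, Real.rpow_neg (by norm_num), Real.rpow_mul (by norm_num),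
          Real.rpow_natCast]
        ring

lemma far_exp_le (n : ℕ) {t : ℝ} (ht : 0 < t) (m j k : ℤ) (L : ℕ)
    (hm' : √t < (2 : ℝ) ^ (m + 1)) {x y : Euc n}
    (hx : x ∈ annulus n j) (hy : y ∈ annulus n k) (h : ¬ (m < j ∧ |j - k| ≤ 1)) :
    Real.exp (-‖x - y‖ ^ 2 / (4 * t)) ≤ L.factorial * (2 : ℝ) ^ (8 * (L : ℝ)) *
      ((2 : ℝ) ^ (-(L : ℝ) * max ((j - m : ℤ) : ℝ) 0) *
        (2 : ℝ) ^ (-(L : ℝ) * max ((k - m : ℤ) : ℝ) 0)) := by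
  have hLf : (1 : ℝ) ≤ L.factorial := by exact_mod_cast Nat.one_le_iff_ne_zero.2 L.factorial_ne_zero
  have hL0 : (0 : ℝ) ≤ L := by positivity
  rw [mul_assoc, ← Real.rpow_add (by norm_num), ← Real.rpow_add (by norm_num)]
  have hexp1 : Real.exp (-‖x - y‖ ^ 2 / (4 * t)) ≤ 1 := by
    apply Real.exp_le_one_iff.2
    apply div_nonpos_of_nonpos_of_nonneg <;> nlinarith [sq_nonneg ‖x - y‖]
  -- the trivial case
  have triv : ∀ (_ : max ((j - m : ℤ) : ℝ) 0 + max ((k - m : ℤ) : ℝ) 0 ≤ 8),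
      Real.exp (-‖x - y‖ ^ 2 / (4 * t)) ≤ L.factorial *
        (2 : ℝ) ^ (8 * (L : ℝ) + (-(L : ℝ) * max ((j - m : ℤ) : ℝ) 0 +
          -(L : ℝ) * max ((k - m : ℤ) : ℝ) 0)) := by
    intro h8
    refine hexp1.trans ?_
    have : (1 : ℝ) ≤ (2 : ℝ) ^ (8 * (L : ℝ) + (-(L : ℝ) * max ((j - m : ℤ) : ℝ) 0 +
          -(L : ℝ) * max ((k - m : ℤ) : ℝ) 0)) := by
      apply Real.one_le_rpow (by norm_num)
      nlinarith
    nlinarith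
  -- the main case
  have main : ∀ J : ℤ, j ≤ J → k ≤ J → (2 : ℝ) ^ (J - 2) ≤ ‖x - y‖ →
      Real.exp (-‖x - y‖ ^ 2 / (4 * t)) ≤ L.factorial *
        (2 : ℝ) ^ (8 * (L : ℝ) + (-(L : ℝ) * max ((j - m : ℤ) : ℝ) 0 +
          -(L : ℝ) * max ((k - m : ℤ) : ℝ) 0)) := by
    intro J hj hk hJ
    have hj' : ((j - m : ℤ) : ℝ) ≤ ((J - m : ℤ) : ℝ) := by exact_mod_cast (by omega)
    have hk' : ((k - m : ℤ) : ℝ) ≤ ((J - m : ℤ) : ℝ) := by exact_mod_cast (by omega)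
    rcases le_total ((J - m : ℤ) : ℝ) 0 with hneg | hpos
    · apply triv
      rw [max_eq_right (hj'.trans hneg), max_eq_right (hk'.trans hneg)]
      norm_num
    have ht4 : t ≤ ((2 : ℝ) ^ (m + 1)) ^ 2 := by
      calc t = (√t) ^ 2 := (Real.sq_sqrt ht.le).symm
        _ ≤ _ := by gcongr
    have hu : (2 : ℝ) ^ (2 * ((J - m : ℤ) : ℝ) - 8) ≤ ‖x - y‖ ^ 2 / (4 * t) := by
      calc (2 : ℝ) ^ (2 * ((J - m : ℤ) : ℝ) - 8)
          = ((2 : ℝ) ^ (J - 2)) ^ 2 / (4 * ((2 : ℝ) ^ (m + 1)) ^ 2) := by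
            have e1 : (2 * ((J - m : ℤ) : ℝ) - 8) = ((2 * (J - m) - 8 : ℤ) : ℝ) := by push_cast; ring
            rw [e1, Real.rpow_intCast]
            have e2 : (4 : ℝ) = (2 : ℝ) ^ (2 : ℤ) := by norm_num
            rw [e2, ← zpow_natCast, ← zpow_natCast, ← zpow_mul, ← zpow_mul,
              ← zpow_add₀ (by norm_num), ← zpow_sub₀ (by norm_num)]
            congr 1
            push_cast
            ring
        _ ≤ _ := by gcongr
    rw [neg_div]
    refine (exp_neg_le_aux L hu).trans ?_
    gcongr
    · norm_num
    have m1 : max ((j - m : ℤ) : ℝ) 0 ≤ ((J - m : ℤ) : ℝ) := max_le hj' hpos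
    have m2 : max ((k - m : ℤ) : ℝ) 0 ≤ ((J - m : ℤ) : ℝ) := max_le hk' hpos
    nlinarith
  obtain ⟨hx1, hx2⟩ := hx
  obtain ⟨hy1, hy2⟩ := hy
  rcases le_or_gt (k + 2) j with h1 | h1
  · apply main j le_rfl (by omega)
    have e1 : (2 : ℝ) ^ (j - 1) = 2 * (2 : ℝ) ^ (j - 2) := by
      rw [show j - 1 = (j - 2) + 1 by ring, zpow_add_one₀ (by norm_num)]; ring
    have e2 : (2 : ℝ) ^ k ≤ (2 : ℝ) ^ (j - 2) := zpow_le_zpow_right₀ (by norm_num) (by omega)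
    have := norm_sub_norm_le x y
    linarith
  rcases le_or_gt (j + 2) k with h2 | h2
  · apply main k (by omega) le_rfl
    have e1 : (2 : ℝ) ^ (k - 1) = 2 * (2 : ℝ) ^ (k - 2) := by
      rw [show k - 1 = (k - 2) + 1 by ring, zpow_add_one₀ (by norm_num)]; ring
    have e2 : (2 : ℝ) ^ j ≤ (2 : ℝ) ^ (k - 2) := zpow_le_zpow_right₀ (by norm_num) (by omega)
    have := norm_sub_norm_le y x
    rw [norm_sub_rev] at this
    linarith
  · apply triv
    have hjk : |j - k| ≤ 1 := abs_le.2 ⟨by omega, by omega⟩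
    have hjm : j ≤ m := by
      by_contra hc
      exact h ⟨by omega, hjk⟩
    have a1 : ((j - m : ℤ) : ℝ) ≤ 0 := by exact_mod_cast (by omega)
    have a2 : ((k - m : ℤ) : ℝ) ≤ 1 := by exact_mod_cast (by omega)
    rw [max_eq_right a1]
    have : max ((k - m : ℤ) : ℝ) 0 ≤ 1 := max_le a2 (by norm_num)
    linarith

lemma far_kernel_le (n : ℕ) {t : ℝ} (ht : 0 < t) (m j k : ℤ) (L : ℕ)
    (hm : (2 : ℝ) ^ m ≤ √t) (hm' : √t < (2 : ℝ) ^ (m + 1)) {x y : Euc n}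
    (hx : x ∈ annulus n j) (hy : y ∈ annulus n k) (h : ¬ (m < j ∧ |j - k| ≤ 1)) :
    ENNReal.ofReal (heatKernel n t x y) ≤
      (2 : ℝ≥0∞) ^ (-(m : ℝ) * n) * (ENNReal.ofReal (L.factorial * (2 : ℝ) ^ (8 * (L : ℝ))) *
      ((2 : ℝ≥0∞) ^ (-(L : ℝ) * max ((j - m : ℤ) : ℝ) 0) *
        (2 : ℝ≥0∞) ^ (-(L : ℝ) * max ((k - m : ℤ) : ℝ) 0))) := by
  simp only [← two_ofReal_rpow]
  rw [← ENNReal.ofReal_mul (by positivity), ← ENNReal.ofReal_mul (by positivity),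
    ← ENNReal.ofReal_mul (by positivity)]
  apply ENNReal.ofReal_le_ofReal
  unfold heatKernel
  gcongr
  · exact prefactor_le n ht m hm
  · exact far_exp_le n ht m j k L hm' hx hy h

lemma measurableSet_annulus (n : ℕ) (k : ℤ) : MeasurableSet (annulus n k) :=
  (measurableSet_le measurable_const measurable_norm).inter
    (measurableSet_lt measurable_norm measurable_const)

lemma volume_annulus_le (n : ℕ) (hn : 1 ≤ n) (k : ℤ) :
    volume (annulus n k) ≤ volume (Metric.ball (0 : Euc n) 1) * (2 : ℝ≥0∞) ^ ((k : ℝ) * n) := by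
  have : Nonempty (Fin n) := ⟨⟨0, hn⟩⟩
  calc volume (annulus n k) ≤ volume (Metric.ball (0 : Euc n) ((2 : ℝ) ^ k)) := by
        apply measure_mono
        intro x hx
        simpa using hx.2
    _ = _ := by
        rw [Measure.addHaar_ball _ _ (by positivity), mul_comm, finrank_euclideanSpace_fin,
          ← two_ofReal_rpow, Real.rpow_mul (by norm_num), Real.rpow_intCast, Real.rpow_natCast]

lemma exists_annulus (n : ℕ) {y : Euc n} (hy : y ≠ 0) : ∃ k, y ∈ annulus n k := by
  have h0 : 0 < ‖y‖ := norm_pos_iff.2 hy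
  refine ⟨Int.log 2 ‖y‖ + 1, ?_, ?_⟩
  · have := Int.zpow_log_le_self (b := 2) (by norm_num) h0
    simpa using this
  · have := Int.lt_zpow_succ_log_self (b := 2) (by norm_num) ‖y‖
    simpa using this

/-! ### The positive heat operator on nonnegative functions -/

def hop (n : ℕ) (t : ℝ) (g : Euc n → ℝ≥0∞) (x : Euc n) : ℝ≥0∞ :=
  ∫⁻ y, ENNReal.ofReal (heatKernel n t x y) * g y

lemma measurable_hop (n : ℕ) (t : ℝ) {g : Euc n → ℝ≥0∞} (hg : Measurable g) :
    Measurable (hop n t g) := by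
  have h : Measurable (fun z : Euc n × Euc n => ENNReal.ofReal (heatKernel n t z.1 z.2) * g z.2) :=
    (measurable_heatKernel n t).mul (hg.comp measurable_snd)
  exact h.lintegral_prod_right'

lemma hop_le_eLpNorm (n : ℕ) {t : ℝ} (ht : 0 < t) {g : Euc n → ℝ≥0∞} (hg : Measurable g)
    {p : ℝ≥0∞} (hp : 1 ≤ p) (x : Euc n) :
    hop n t g x ≤ eLpNorm g p
      (volume.withDensity fun y => ENNReal.ofReal (heatKernel n t x y)) := by
  set ν := (volume : Measure (Euc n)).withDensity fun y => ENNReal.ofReal (heatKernel n t x y)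
  have hprob : IsProbabilityMeasure ν := by
    refine ⟨?_⟩
    rw [withDensity_apply _ MeasurableSet.univ, Measure.restrict_univ, lintegral_heatKernel n ht]
  have h1 : hop n t g x = eLpNorm g 1 ν := by
    rw [eLpNorm_one_eq_lintegral_enorm,
      lintegral_withDensity_eq_lintegral_mul _ (measurable_heatKernel_right n t x)
      (by simpa using hg)]
    rfl
  rw [h1]
  exact eLpNorm_le_eLpNorm_of_exponent_le hp hg.aestronglyMeasurable

lemma hop_rpow_le (n : ℕ) {t : ℝ} (ht : 0 < t) {g : Euc n → ℝ≥0∞} (hg : Measurable g)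
    {p : ℝ≥0∞} (hp : 1 ≤ p) (hpt : p ≠ ⊤) (x : Euc n) :
    hop n t g x ^ p.toReal ≤ hop n t (fun y => g y ^ p.toReal) x := by
  have hp0 : p ≠ 0 := (zero_lt_one.trans_le hp).ne'
  have hpp : 0 < p.toReal := ENNReal.toReal_pos hp0 hpt
  have h := hop_le_eLpNorm n ht hg hp x
  rw [eLpNorm_eq_lintegral_rpow_enorm_toReal hp0 hpt, lintegral_withDensity_eq_lintegral_mul _
    (measurable_heatKernel_right n t x) (by simpa using hg.pow_const _)] at h
  calc hop n t g x ^ p.toReal ≤ _ := by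
        apply ENNReal.rpow_le_rpow h hpp.le
    _ = _ := by
        rw [← ENNReal.rpow_mul, one_div_mul_cancel hpp.ne', ENNReal.rpow_one]
        rfl

lemma lintegral_hop (n : ℕ) {t : ℝ} (ht : 0 < t) {g : Euc n → ℝ≥0∞} (hg : Measurable g) :
    ∫⁻ x, hop n t g x = ∫⁻ y, g y := by
  unfold hop
  have h : Measurable (fun z : Euc n × Euc n => ENNReal.ofReal (heatKernel n t z.1 z.2) * g z.2) :=
    (measurable_heatKernel n t).mul (hg.comp measurable_snd)
  rw [lintegral_lintegral_swap (f := fun x y => ENNReal.ofReal (heatKernel n t x y) * g y)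
    h.aemeasurable]
  congr 1
  ext y
  simp_rw [heatKernel_comm n t _ y]
  rw [lintegral_mul_const _ (measurable_heatKernel_right n t y), lintegral_heatKernel n ht, one_mul]

lemma eLpNorm_rpow_toReal {g : Euc n → ℝ≥0∞} {p : ℝ≥0∞} (hp0 : p ≠ 0) (hpt : p ≠ ⊤) :
    eLpNorm g p volume ^ p.toReal = ∫⁻ x, g x ^ p.toReal := by
  have hpp : 0 < p.toReal := ENNReal.toReal_pos hp0 hpt
  rw [eLpNorm_eq_lintegral_rpow_enorm_toReal hp0 hpt, ← ENNReal.rpow_mul,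
    one_div_mul_cancel hpp.ne', ENNReal.rpow_one]
  simp

lemma lintegral_hop_rpow_le (n : ℕ) {t : ℝ} (ht : 0 < t) {g : Euc n → ℝ≥0∞} (hg : Measurable g)
    {p : ℝ≥0∞} (hp : 1 ≤ p) (hpt : p ≠ ⊤) :
    ∫⁻ x, hop n t g x ^ p.toReal ≤ eLpNorm g p volume ^ p.toReal := by
  have hp0 : p ≠ 0 := (zero_lt_one.trans_le hp).ne'
  rw [eLpNorm_rpow_toReal hp0 hpt]
  calc _ ≤ ∫⁻ x, hop n t (fun y => g y ^ p.toReal) x :=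
        lintegral_mono fun x => hop_rpow_le n ht hg hp hpt x
    _ = _ := lintegral_hop n ht (hg.pow_const _)

/-- pointwise bound -/
lemma hop_le (n : ℕ) {t : ℝ} (ht : 0 < t) (m : ℤ) (hm : (2 : ℝ) ^ m ≤ √t)
    {g : Euc n → ℝ≥0∞} (hg : Measurable g) {p : ℝ≥0∞} (hp : 1 ≤ p) (x : Euc n) :
    hop n t g x ≤ (2 : ℝ≥0∞) ^ (-(m : ℝ) * n * p.toReal⁻¹) * eLpNorm g p volume := by
  have hp0 : p ≠ 0 := (zero_lt_one.trans_le hp).ne'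
  by_cases hpt : p = ⊤
  · subst hpt
    simp only [ENNReal.toReal_top, _root_.inv_zero, mul_zero, ENNReal.rpow_zero, one_mul]
    refine (hop_le_eLpNorm n ht hg hp x).trans ?_
    rw [eLpNorm_exponent_top, eLpNorm_exponent_top]
    exact eLpNormEssSup_mono_measure _ (withDensity_absolutelyContinuous _ _)
  have hpp : 0 < p.toReal := ENNReal.toReal_pos hp0 hpt
  have h1 : hop n t g x ^ p.toReal ≤
      (2 : ℝ≥0∞) ^ (-(m : ℝ) * n) * eLpNorm g p volume ^ p.toReal := by
    refine (hop_rpow_le n ht hg hp hpt x).trans ?_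
    rw [eLpNorm_rpow_toReal hp0 hpt, ← lintegral_const_mul _ (hg.pow_const _)]
    unfold hop
    gcongr with y
    exact heatKernel_le n ht m hm x y
  calc hop n t g x = (hop n t g x ^ p.toReal) ^ p.toReal⁻¹ := by
        rw [← ENNReal.rpow_mul, mul_inv_cancel₀ hpp.ne', ENNReal.rpow_one]
    _ ≤ ((2 : ℝ≥0∞) ^ (-(m : ℝ) * n) * eLpNorm g p volume ^ p.toReal) ^ p.toReal⁻¹ := by
        gcongr
    _ = _ := by
        rw [ENNReal.mul_rpow_of_nonneg _ _ (by positivity), ← ENNReal.rpow_mul,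
          ← ENNReal.rpow_mul, mul_inv_cancel₀ hpp.ne', ENNReal.rpow_one]

lemma hop_Lp_le (n : ℕ) {t : ℝ} (ht : 0 < t)
    {g : Euc n → ℝ≥0∞} (hg : Measurable g) {p : ℝ≥0∞} (hp : 1 ≤ p) :
    eLpNorm (hop n t g) p volume ≤ eLpNorm g p volume := by
  have hp0 : p ≠ 0 := (zero_lt_one.trans_le hp).ne'
  by_cases hpt : p = ⊤
  · subst hpt
    refine (eLpNorm_le_of_ae_enorm_bound (C := eLpNorm g ⊤ volume) ?_).trans ?_
    · refine Eventually.of_forall fun x => ?_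
      refine (hop_le_eLpNorm n ht hg hp x).trans ?_
      rw [eLpNorm_exponent_top, eLpNorm_exponent_top]
      exact eLpNormEssSup_mono_measure _ (withDensity_absolutelyContinuous _ _)
    · simp
  have hpp : 0 < p.toReal := ENNReal.toReal_pos hp0 hpt
  rw [← ENNReal.rpow_le_rpow_iff hpp, eLpNorm_rpow_toReal (g := hop n t g) hp0 hpt]
  exact lintegral_hop_rpow_le n ht hg hp hpt

lemma hop_Lq_le (n : ℕ) {t : ℝ} (ht : 0 < t) (m : ℤ) (hm : (2 : ℝ) ^ m ≤ √t)
    {g : Euc n → ℝ≥0∞} (hg : Measurable g) {p q : ℝ≥0∞} (hp : 1 ≤ p) (hpq : p ≤ q) :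
    eLpNorm (hop n t g) q volume ≤
      (2 : ℝ≥0∞) ^ (-(m : ℝ) * n * (p.toReal⁻¹ - q.toReal⁻¹)) * eLpNorm g p volume := by
  have hp0 : p ≠ 0 := (zero_lt_one.trans_le hp).ne'
  by_cases hqt : q = ⊤
  · subst hqt
    refine (eLpNorm_le_of_ae_enorm_bound (Eventually.of_forall fun x =>
      hop_le n ht m hm hg hp x)).trans ?_
    simp
  have hpt : p ≠ ⊤ := ne_top_of_le_ne_top hqt hpq
  have hq0 : q ≠ 0 := ((zero_lt_one.trans_le hp).trans_le hpq).ne'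
  have hpp : 0 < p.toReal := ENNReal.toReal_pos hp0 hpt
  have hqp : 0 < q.toReal := ENNReal.toReal_pos hq0 hqt
  have hle : p.toReal ≤ q.toReal := ENNReal.toReal_mono hqt hpq
  set N := eLpNorm g p volume
  rw [← ENNReal.rpow_le_rpow_iff hqp, eLpNorm_rpow_toReal (g := hop n t g) hq0 hqt]
  calc ∫⁻ x, hop n t g x ^ q.toReal
      ≤ ∫⁻ x, hop n t g x ^ p.toReal *
        ((2 : ℝ≥0∞) ^ (-(m : ℝ) * n * p.toReal⁻¹) * N) ^ (q.toReal - p.toReal) := by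
        refine lintegral_mono fun x => ?_
        calc hop n t g x ^ q.toReal = hop n t g x ^ (p.toReal + (q.toReal - p.toReal)) := by
              congr 1; ring
          _ = hop n t g x ^ p.toReal * hop n t g x ^ (q.toReal - p.toReal) :=
              ENNReal.rpow_add_of_nonneg _ _ hpp.le (by linarith)
          _ ≤ _ := by
              gcongr
              exact hop_le n ht m hm hg hp x
    _ = (∫⁻ x, hop n t g x ^ p.toReal) *
        ((2 : ℝ≥0∞) ^ (-(m : ℝ) * n * p.toReal⁻¹) * N) ^ (q.toReal - p.toReal) :=
        lintegral_mul_const _ ((measurable_hop n t hg).pow_const _)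
    _ ≤ N ^ p.toReal * ((2 : ℝ≥0∞) ^ (-(m : ℝ) * n * p.toReal⁻¹) * N) ^ (q.toReal - p.toReal) := by
        gcongr
        exact lintegral_hop_rpow_le n ht hg hp hpt
    _ = _ := by
        rw [ENNReal.mul_rpow_of_nonneg _ _ (by linarith), ENNReal.mul_rpow_of_nonneg _ _ hqp.le,
          mul_left_comm, ← ENNReal.rpow_add_of_nonneg _ _ hpp.le (by linarith),
          ← ENNReal.rpow_mul, ← ENNReal.rpow_mul]
        congr 2
        · field_simp
        · ring

/-! ### Pieces on annuli -/

/-- the modulus of the restriction of `f` to the `k`-th annulus -/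
def pc (n : ℕ) (f : Euc n → ℝ) (k : ℤ) (x : Euc n) : ℝ≥0∞ := ‖(annulus n k).indicator f x‖ₑ

lemma measurable_pc (n : ℕ) {f : Euc n → ℝ} (hf : Measurable f) (k : ℤ) :
    Measurable (pc n f k) := (hf.indicator (measurableSet_annulus n k)).enorm

lemma eLpNorm_pc (n : ℕ) (f : Euc n → ℝ) (k : ℤ) (p : ℝ≥0∞) :
    eLpNorm (pc n f k) p volume = eLpNorm ((annulus n k).indicator f) p volume :=
  eLpNorm_enorm _

/-- The weighted norms of the pieces. -/
def hseq (n : ℕ) (s : ℝ) (p : ℝ≥0∞) (f : Euc n → ℝ) (k : ℤ) : ℝ≥0∞ :=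
  (2 : ℝ≥0∞) ^ ((k : ℝ) * s) * eLpNorm ((annulus n k).indicator f) p volume

lemma eLpNorm_piece_eq (n : ℕ) (s : ℝ) (p : ℝ≥0∞) (f : Euc n → ℝ) (k : ℤ) :
    eLpNorm ((annulus n k).indicator f) p volume
      = (2 : ℝ≥0∞) ^ (-((k : ℝ) * s)) * hseq n s p f k := by
  rw [hseq, ← mul_assoc, ← two_rpow_add, neg_add_cancel, ENNReal.rpow_zero, one_mul]

lemma inv_toReal_le_one {p : ℝ≥0∞} (hp : 1 ≤ p) : p.toReal⁻¹ ≤ 1 := by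
  rw [← ENNReal.toReal_inv, ← ENNReal.toReal_one]
  exact ENNReal.toReal_mono ENNReal.one_ne_top (ENNReal.inv_le_one.2 hp)

lemma lintegral_pc_le (n : ℕ) (hn : 1 ≤ n) {f : Euc n → ℝ} (hf : Measurable f) (μ : ℝ)
    {p : ℝ≥0∞} (hp : 1 ≤ p) (k : ℤ) :
    ∫⁻ y, pc n f k y ≤ volume (Metric.ball (0 : Euc n) 1) ^ (1 - p.toReal⁻¹) *
      ((2 : ℝ≥0∞) ^ ((k : ℝ) * (n - (μ + n * p.toReal⁻¹))) * hseq n μ p f k) := by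
  have hip := inv_toReal_le_one hp
  have h1 : ∫⁻ y, pc n f k y = eLpNorm f 1 (volume.restrict (annulus n k)) := by
    rw [← eLpNorm_indicator_eq_eLpNorm_restrict (measurableSet_annulus n k),
      eLpNorm_one_eq_lintegral_enorm]
    rfl
  have h2 := eLpNorm_le_eLpNorm_mul_rpow_measure_univ (μ := volume.restrict (annulus n k)) hp
    hf.aestronglyMeasurable
  rw [← eLpNorm_indicator_eq_eLpNorm_restrict (p := p) (measurableSet_annulus n k),
    eLpNorm_piece_eq n μ, Measure.restrict_apply_univ, ENNReal.toReal_one, one_div, inv_one,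
    one_div] at h2
  rw [h1]
  refine h2.trans ?_
  calc _ ≤ (2 : ℝ≥0∞) ^ (-((k : ℝ) * μ)) * hseq n μ p f k *
        (volume (Metric.ball (0 : Euc n) 1) * (2 : ℝ≥0∞) ^ ((k : ℝ) * n)) ^ (1 - p.toReal⁻¹) := by
        gcongr
        exact volume_annulus_le n hn k
    _ = volume (Metric.ball (0 : Euc n) 1) ^ (1 - p.toReal⁻¹) *
      (((2 : ℝ≥0∞) ^ (-((k : ℝ) * μ)) * (2 : ℝ≥0∞) ^ ((k : ℝ) * n * (1 - p.toReal⁻¹)))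
        * hseq n μ p f k) := by
        rw [ENNReal.mul_rpow_of_nonneg _ _ (by linarith), ← ENNReal.rpow_mul]
        ring
    _ = _ := by
        rw [← two_rpow_add]
        congr 3
        ring

lemma heat_le_tsum (n : ℕ) (hn : 1 ≤ n) {t : ℝ} (ht : 0 < t) {f : Euc n → ℝ} (hf : Measurable f)
    (x : Euc n) : ‖heatSemigroup n t f x‖ₑ ≤ ∑' k, hop n t (pc n f k) x := by
  have : Nonempty (Fin n) := ⟨⟨0, hn⟩⟩
  have hae : ∀ᵐ y : Euc n, y ≠ 0 := by
    simp [ae_iff, measure_singleton]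
  calc ‖heatSemigroup n t f x‖ₑ ≤ ∫⁻ y, ‖heatKernel n t x y * f y‖ₑ :=
        enorm_integral_le_lintegral_enorm _
    _ ≤ ∫⁻ y, ∑' k, ENNReal.ofReal (heatKernel n t x y) * pc n f k y := by
        refine lintegral_mono_ae ?_
        filter_upwards [hae] with y hy
        obtain ⟨k, hk⟩ := exists_annulus n hy
        refine le_trans ?_ (ENNReal.le_tsum k)
        rw [enorm_mul, Real.enorm_of_nonneg (heatKernel_nonneg n ht x y), pc, indicator_of_mem hk]
    _ = _ := by
        rw [lintegral_tsum]
        · rfl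
        · intro k
          exact ((measurable_heatKernel_right n t x).mul (measurable_pc n hf k)).aemeasurable

lemma hop_far_le (n : ℕ) (hn : 1 ≤ n) {t : ℝ} (ht : 0 < t) (m j k : ℤ) (L : ℕ)
    (hm : (2 : ℝ) ^ m ≤ √t) (hm' : √t < (2 : ℝ) ^ (m + 1)) {f : Euc n → ℝ} (hf : Measurable f)
    (μ : ℝ) {p : ℝ≥0∞} (hp : 1 ≤ p)
    {x : Euc n} (hx : x ∈ annulus n j) (h : ¬ (m < j ∧ |j - k| ≤ 1)) :
    hop n t (pc n f k) x ≤
      ENNReal.ofReal (L.factorial * (2 : ℝ) ^ (8 * (L : ℝ))) *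
        volume (Metric.ball (0 : Euc n) 1) ^ (1 - p.toReal⁻¹) *
      (2 : ℝ≥0∞) ^ (-(m : ℝ) * (μ + n * p.toReal⁻¹) -(L : ℝ) * max ((j - m : ℤ) : ℝ) 0) *
        (wt L (n - (μ + n * p.toReal⁻¹)) (k - m) * hseq n μ p f k) := by
  set CL := ENNReal.ofReal (L.factorial * (2 : ℝ) ^ (8 * (L : ℝ)))
  set V := volume (Metric.ball (0 : Euc n) 1)
  calc hop n t (pc n f k) x
      ≤ ∫⁻ y, ((2 : ℝ≥0∞) ^ (-(m : ℝ) * n) * (CL *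
      ((2 : ℝ≥0∞) ^ (-(L : ℝ) * max ((j - m : ℤ) : ℝ) 0) *
        (2 : ℝ≥0∞) ^ (-(L : ℝ) * max ((k - m : ℤ) : ℝ) 0)))) * pc n f k y := by
        refine lintegral_mono fun y => ?_
        by_cases hy : y ∈ annulus n k
        · simp only
          gcongr
          exact far_kernel_le n ht m j k L hm hm' hx hy h
        · simp [pc, indicator_of_notMem hy]
    _ = ((2 : ℝ≥0∞) ^ (-(m : ℝ) * n) * (CL *
      ((2 : ℝ≥0∞) ^ (-(L : ℝ) * max ((j - m : ℤ) : ℝ) 0) *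
        (2 : ℝ≥0∞) ^ (-(L : ℝ) * max ((k - m : ℤ) : ℝ) 0)))) * ∫⁻ y, pc n f k y :=
        lintegral_const_mul _ (measurable_pc n hf k)
    _ ≤ ((2 : ℝ≥0∞) ^ (-(m : ℝ) * n) * (CL *
      ((2 : ℝ≥0∞) ^ (-(L : ℝ) * max ((j - m : ℤ) : ℝ) 0) *
        (2 : ℝ≥0∞) ^ (-(L : ℝ) * max ((k - m : ℤ) : ℝ) 0)))) *
        (V ^ (1 - p.toReal⁻¹) *
      ((2 : ℝ≥0∞) ^ ((k : ℝ) * (n - (μ + n * p.toReal⁻¹))) * hseq n μ p f k)) := by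
        gcongr
        exact lintegral_pc_le n hn hf μ hp k
    _ = CL * V ^ (1 - p.toReal⁻¹) * (((2 : ℝ≥0∞) ^ (-(m : ℝ) * n) *
        (2 : ℝ≥0∞) ^ (-(L : ℝ) * max ((j - m : ℤ) : ℝ) 0)) *
        ((2 : ℝ≥0∞) ^ (-(L : ℝ) * max ((k - m : ℤ) : ℝ) 0) *
        (2 : ℝ≥0∞) ^ ((k : ℝ) * (n - (μ + n * p.toReal⁻¹))))) * hseq n μ p f k := by ring
    _ = CL * V ^ (1 - p.toReal⁻¹) * ((2 : ℝ≥0∞) ^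
          (-(m : ℝ) * (μ + n * p.toReal⁻¹) -(L : ℝ) * max ((j - m : ℤ) : ℝ) 0) *
          wt L (n - (μ + n * p.toReal⁻¹)) (k - m)) * hseq n μ p f k := by
        congr 2
        rw [wt, ← two_rpow_add, ← two_rpow_add, ← two_rpow_add, ← two_rpow_add]
        congr 1
        push_cast
        ring
    _ = _ := by ring

/-- Pointwise splitting into far part and diagonal part. -/
lemma heat_pointwise (n : ℕ) (hn : 1 ≤ n) {t : ℝ} (ht : 0 < t) (m j : ℤ) (L : ℕ)
    (hm : (2 : ℝ) ^ m ≤ √t) (hm' : √t < (2 : ℝ) ^ (m + 1)) {f : Euc n → ℝ} (hf : Measurable f)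
    (μ : ℝ) {p : ℝ≥0∞} (hp : 1 ≤ p) {x : Euc n} (hx : x ∈ annulus n j) :
    ‖heatSemigroup n t f x‖ₑ ≤
      ENNReal.ofReal (L.factorial * (2 : ℝ) ^ (8 * (L : ℝ))) *
        volume (Metric.ball (0 : Euc n) 1) ^ (1 - p.toReal⁻¹) *
      (2 : ℝ≥0∞) ^ (-(m : ℝ) * (μ + n * p.toReal⁻¹) -(L : ℝ) * max ((j - m : ℤ) : ℝ) 0) *
        (∑' k, wt L (n - (μ + n * p.toReal⁻¹)) (k - m) * hseq n μ p f k) +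
      ∑ k ∈ Finset.Icc (j - 1) (j + 1), (if m < j then hop n t (pc n f k) x else 0) := by
  set X := ENNReal.ofReal (L.factorial * (2 : ℝ) ^ (8 * (L : ℝ))) *
        volume (Metric.ball (0 : Euc n) 1) ^ (1 - p.toReal⁻¹) *
      (2 : ℝ≥0∞) ^ (-(m : ℝ) * (μ + n * p.toReal⁻¹) -(L : ℝ) * max ((j - m : ℤ) : ℝ) 0) with hX
  have hsum : ∑ k ∈ Finset.Icc (j - 1) (j + 1), (if m < j then hop n t (pc n f k) x else 0)
      = ∑' k, if m < j ∧ |j - k| ≤ 1 then hop n t (pc n f k) x else 0 := by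
    rw [tsum_eq_sum (s := Finset.Icc (j - 1) (j + 1))]
    · refine Finset.sum_congr rfl fun k hk => ?_
      rw [Finset.mem_Icc] at hk
      have : |j - k| ≤ 1 := abs_le.2 ⟨by omega, by omega⟩
      simp [this]
    · intro k hk
      rw [if_neg]
      rintro ⟨-, h⟩
      rw [abs_le] at h
      exact hk (Finset.mem_Icc.2 ⟨by omega, by omega⟩)
  rw [hsum, ← ENNReal.tsum_mul_left, ← ENNReal.tsum_add]
  refine (heat_le_tsum n hn ht hf x).trans (ENNReal.tsum_le_tsum fun k => ?_)
  split_ifs with h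
  · exact le_add_self
  · rw [add_zero]
    exact hop_far_le n hn ht m j k L hm hm' hf μ hp hx h

lemma const_annulus_le (n : ℕ) (hn : 1 ≤ n) (j : ℤ) (q c : ℝ≥0∞) :
    eLpNorm (fun _ : Euc n => c) q (volume.restrict (annulus n j)) ≤
      c * (volume (Metric.ball (0 : Euc n) 1) ^ (q.toReal⁻¹) *
        (2 : ℝ≥0∞) ^ ((j : ℝ) * n * q.toReal⁻¹)) := by
  refine (eLpNorm_le_of_ae_enorm_bound (C := c) (Eventually.of_forall fun x => by simp)).trans ?_
  rw [smul_eq_mul, Measure.restrict_apply_univ, ENNReal.rpow_mul,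
    ← ENNReal.mul_rpow_of_nonneg _ _ (by positivity)]
  gcongr
  exact volume_annulus_le n hn j

/-- decay exponent on the diagonal -/
def dexp (n : ℕ) (μ ν : ℝ) (p q : ℝ≥0∞) : ℝ :=
  if p ≤ q then μ - ν else (μ + n * p.toReal⁻¹) - (ν + n * q.toReal⁻¹)

lemma diag_le (n : ℕ) (hn : 1 ≤ n) (μ ν : ℝ) {p q : ℝ≥0∞} (hp : 1 ≤ p) (hq : 1 ≤ q) :
    ∃ K : ℝ≥0∞, K ≠ ⊤ ∧ ∀ (t : ℝ), 0 < t → ∀ (m j k : ℤ), (2 : ℝ) ^ m ≤ √t → |j - k| ≤ 1 →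
      ∀ f : Euc n → ℝ, Measurable f →
      (2 : ℝ≥0∞) ^ ((j : ℝ) * ν) * eLpNorm (hop n t (pc n f k)) q (volume.restrict (annulus n j)) ≤
        K * ((2 : ℝ≥0∞) ^ ((m : ℝ) * ((ν + n * q.toReal⁻¹) - (μ + n * p.toReal⁻¹))) *
          ((2 : ℝ≥0∞) ^ (-dexp n μ ν p q * ((j : ℝ) - m)) * hseq n μ p f k)) := by
  set V := volume (Metric.ball (0 : Euc n) 1) with hV
  have hVt : V ≠ ⊤ := measure_ball_lt_top.ne
  have key : ∀ j k : ℤ, |j - k| ≤ 1 → ((j : ℝ) - k) * μ ≤ |μ| := by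
    intro j k h
    have h1 : |(j : ℝ) - k| ≤ 1 := by exact_mod_cast h
    calc ((j : ℝ) - k) * μ ≤ |((j : ℝ) - k) * μ| := le_abs_self _
      _ = |(j : ℝ) - k| * |μ| := abs_mul _ _
      _ ≤ 1 * |μ| := by gcongr
      _ = |μ| := one_mul _
  by_cases hpq : p ≤ q
  · refine ⟨(2 : ℝ≥0∞) ^ |μ|, two_rpow_ne_top _, fun t ht m j k hm hjk f hf => ?_⟩
    calc _ ≤ (2 : ℝ≥0∞) ^ ((j : ℝ) * ν) *
          ((2 : ℝ≥0∞) ^ (-(m : ℝ) * n * (p.toReal⁻¹ - q.toReal⁻¹)) *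
            ((2 : ℝ≥0∞) ^ (-((k : ℝ) * μ)) * hseq n μ p f k)) := by
          gcongr
          refine (eLpNorm_mono_measure _ Measure.restrict_le_self).trans ?_
          refine (hop_Lq_le n ht m hm (measurable_pc n hf k) hp hpq).trans_eq ?_
          rw [eLpNorm_pc, eLpNorm_piece_eq n μ]
      _ = (2 : ℝ≥0∞) ^ ((j : ℝ) * ν + (-(m : ℝ) * n * (p.toReal⁻¹ - q.toReal⁻¹)
            + -((k : ℝ) * μ))) * hseq n μ p f k := by
          rw [two_rpow_add, two_rpow_add]; ring
      _ ≤ (2 : ℝ≥0∞) ^ (|μ| + ((m : ℝ) * ((ν + n * q.toReal⁻¹) - (μ + n * p.toReal⁻¹))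
            + -dexp n μ ν p q * ((j : ℝ) - m))) * hseq n μ p f k := by
          gcongr ?_ * _
          apply two_rpow_mono
          have := key j k hjk
          rw [dexp, if_pos hpq]
          nlinarith
      _ = _ := by
          rw [two_rpow_add, two_rpow_add]; ring
  · have hqp : q ≤ p := (not_le.1 hpq).le
    have hq0 : q ≠ 0 := (zero_lt_one.trans_le hq).ne'
    have hexp : 0 ≤ q.toReal⁻¹ - p.toReal⁻¹ := by
      rw [← ENNReal.toReal_inv, ← ENNReal.toReal_inv, sub_nonneg]
      exact ENNReal.toReal_mono (ENNReal.inv_ne_top.2 hq0) (ENNReal.inv_le_inv.2 hqp)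
    refine ⟨(2 : ℝ≥0∞) ^ |μ| * V ^ (q.toReal⁻¹ - p.toReal⁻¹),
      ENNReal.mul_ne_top (two_rpow_ne_top _) (ENNReal.rpow_ne_top_of_nonneg hexp hVt),
      fun t ht m j k hm hjk f hf => ?_⟩
    calc _ ≤ (2 : ℝ≥0∞) ^ ((j : ℝ) * ν) *
          (((2 : ℝ≥0∞) ^ (-((k : ℝ) * μ)) * hseq n μ p f k) *
            (V * (2 : ℝ≥0∞) ^ ((j : ℝ) * n)) ^ (q.toReal⁻¹ - p.toReal⁻¹)) := by
          gcongr
          refine (eLpNorm_le_eLpNorm_mul_rpow_measure_univ hqp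
            (measurable_hop n t (measurable_pc n hf k)).aestronglyMeasurable).trans ?_
          rw [Measure.restrict_apply_univ, one_div, one_div]
          gcongr
          · refine (eLpNorm_mono_measure _ Measure.restrict_le_self).trans ?_
            refine (hop_Lp_le n ht (measurable_pc n hf k) hp).trans_eq ?_
            rw [eLpNorm_pc, eLpNorm_piece_eq n μ]
          · exact volume_annulus_le n hn j
      _ = V ^ (q.toReal⁻¹ - p.toReal⁻¹) * ((2 : ℝ≥0∞) ^ ((j : ℝ) * ν + (-((k : ℝ) * μ)
            + (j : ℝ) * n * (q.toReal⁻¹ - p.toReal⁻¹)))  * hseq n μ p f k) := by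
          rw [two_rpow_add, two_rpow_add, ENNReal.mul_rpow_of_nonneg _ _ hexp,
            ENNReal.rpow_mul _ ((j : ℝ) * n)]
          ring
      _ ≤ V ^ (q.toReal⁻¹ - p.toReal⁻¹) * ((2 : ℝ≥0∞) ^ (|μ| +
            ((m : ℝ) * ((ν + n * q.toReal⁻¹) - (μ + n * p.toReal⁻¹))
            + -dexp n μ ν p q * ((j : ℝ) - m))) * hseq n μ p f k) := by
          gcongr _ * (?_ * _)
          apply two_rpow_mono
          have := key j k hjk
          rw [dexp, if_neg hpq]
          nlinarith
      _ = _ := by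
          rw [two_rpow_add, two_rpow_add]; ring

/-- The diagonal sequence. -/
def dseq (δ : ℝ) (m : ℤ) (a : ℤ → ℝ≥0∞) (j : ℤ) : ℝ≥0∞ :=
  ∑ k ∈ Finset.Icc (j - 1) (j + 1), if m < j then (2 : ℝ≥0∞) ^ (-δ * ((j : ℝ) - m)) * a k else 0

lemma sum_Icc_three (a : ℤ → ℝ≥0∞) (j : ℤ) :
    ∑ k ∈ Finset.Icc (j - 1) (j + 1), a k = a (j + -1) + (a (j + 0) + a (j + 1)) := by
  have : Finset.Icc (j - 1) (j + 1) = {j + -1, j + 0, j + 1} := by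
    ext k
    simp only [Finset.mem_Icc, Finset.mem_insert, Finset.mem_singleton]
    omega
  rw [this, Finset.sum_insert (by simp), Finset.sum_insert (by simp), Finset.sum_singleton]

lemma dseq_le {δ : ℝ} {r r₀ : ℝ≥0∞} (hr : r ≠ 0) (hr₀ : r₀ ≠ 0) (hδ : 0 ≤ δ)
    (h : 0 < δ ∨ r₀ ≤ r) :
    ∃ K : ℝ≥0∞, K ≠ ⊤ ∧ ∀ (m : ℤ) (a : ℤ → ℝ≥0∞),
      eLpNorm (dseq δ m a) r (Measure.count : Measure ℤ) ≤
        K * eLpNorm a r₀ (Measure.count : Measure ℤ) := by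
  rcases h with h | h
  · refine ⟨3 * eLpNorm (fun i : ℤ => (2 : ℝ≥0∞) ^ (-δ * |(i : ℝ)|)) r Measure.count,
      ENNReal.mul_ne_top (by norm_num) (seq_geom_ne_top h hr), fun m a => ?_⟩
    set N := eLpNorm a r₀ (Measure.count : Measure ℤ) with hN
    rw [← seq_eLpNorm_shift (fun i : ℤ => (2 : ℝ≥0∞) ^ (-δ * |(i : ℝ)|)) hr (-m), mul_right_comm, ← seq_eLpNorm_const_mul _ _ hr]
    refine seq_eLpNorm_mono (fun j => ?_) r
    unfold dseq
    rw [sum_Icc_three]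
    split_ifs with hj
    · have e : |((j + -m : ℤ) : ℝ)| = (j : ℝ) - m := by
        have : (m : ℝ) < j := by exact_mod_cast hj
        push_cast
        rw [abs_of_nonneg (by linarith)]
        ring
      rw [e]
      calc _ ≤ (2 : ℝ≥0∞) ^ (-δ * ((j : ℝ) - m)) * N + ((2 : ℝ≥0∞) ^ (-δ * ((j : ℝ) - m)) * N +
            (2 : ℝ≥0∞) ^ (-δ * ((j : ℝ) - m)) * N) := by
            gcongr <;> exact seq_le_eLpNorm a hr₀ _
        _ = _ := by ring
    · simp
  · refine ⟨LpAddConst r * (1 + LpAddConst r * (1 + 1)), ?_, fun m a => ?_⟩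
    · have hc : LpAddConst r ≠ ⊤ := (LpAddConst_lt_top r).ne
      finiteness
    set N := eLpNorm a r₀ (Measure.count : Measure ℤ) with hN
    have hs : ∀ d : ℤ, eLpNorm (fun j => a (j + d)) r (Measure.count : Measure ℤ) ≤ N := fun d => by
      rw [seq_eLpNorm_shift _ hr]
      exact seq_eLpNorm_anti a hr₀ h
    calc eLpNorm (dseq δ m a) r (Measure.count : Measure ℤ)
        ≤ eLpNorm (fun j => a (j + -1) + (a (j + 0) + a (j + 1))) r (Measure.count : Measure ℤ) := by
          refine seq_eLpNorm_mono (fun j => ?_) r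
          rw [dseq, ← sum_Icc_three]
          gcongr with k
          split_ifs with hj
          · apply mul_le_of_le_one_left'
            rw [← ENNReal.rpow_zero (x := 2)]
            apply two_rpow_mono
            have : (m : ℝ) < j := by exact_mod_cast hj
            nlinarith
          · exact zero_le
      _ ≤ LpAddConst r * (N + LpAddConst r * (N + N)) := by
          refine (seq_eLpNorm_add _ _ r).trans ?_
          gcongr
          · exact hs _
          refine (seq_eLpNorm_add _ _ r).trans ?_
          gcongr <;> exact hs _
      _ = _ := by ring

/-! ### Assembly -/

lemma herz_core (n : ℕ) (hn : 1 ≤ n) (μ ν : ℝ) (p q r r₀ : ℝ≥0∞)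
    (hp : 1 ≤ p) (hq : 1 ≤ q) (hr : r ≠ 0) (hr₀ : r₀ ≠ 0) (hμν : ν ≤ μ)
    (h0 : 0 ≤ ν + n * q.toReal⁻¹) (h1 : ν + n * q.toReal⁻¹ ≤ μ + n * p.toReal⁻¹)
    (h2 : μ + n * p.toReal⁻¹ ≤ n) (h4 : ν + n * q.toReal⁻¹ = 0 → r = ⊤)
    (hA : 0 < n - (μ + n * p.toReal⁻¹) ∨ r₀ ≤ 1)
    (hD : 0 < dexp n μ ν p q ∨ r₀ ≤ r) :
    ∃ K : ℝ≥0∞, K ≠ ⊤ ∧ ∀ t : ℝ, 0 < t → ∀ m : ℤ, (2 : ℝ) ^ m ≤ √t → √t < (2 : ℝ) ^ (m + 1) →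
      ∀ f : Euc n → ℝ, Measurable f →
      herzNorm n ν q r (heatSemigroup n t f) ≤
        K * (2 : ℝ≥0∞) ^ ((m : ℝ) * ((ν + n * q.toReal⁻¹) - (μ + n * p.toReal⁻¹))) *
          herzNorm n μ p r₀ f := by
  set A := μ + n * p.toReal⁻¹ with hAdef
  set B := ν + n * q.toReal⁻¹ with hBdef
  set V := volume (Metric.ball (0 : Euc n) 1) with hV
  have hVt : V ≠ ⊤ := measure_ball_lt_top.ne
  set L : ℕ := n + 1 with hL
  have hLn : (n : ℝ) < (L : ℝ) := by rw [hL]; push_cast; linarith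
  have hip := inv_toReal_le_one hp
  have hδ : 0 ≤ dexp n μ ν p q := by
    unfold dexp
    split_ifs
    · linarith
    · linarith
  obtain ⟨K1, hK1, H1⟩ := sum_wt_le (L := L) (θ := n - A) (by linarith) (by linarith) hr₀ hA
  obtain ⟨K2, hK2, H2⟩ := diag_le n hn μ ν hp hq
  obtain ⟨K3, hK3, H3⟩ := dseq_le hr hr₀ hδ hD
  set K4 := eLpNorm (wt L B) r (Measure.count : Measure ℤ) with hK4def
  have hK4 : K4 ≠ ⊤ := wt_ne_top' h0 (by linarith) hr h4
  set CL := ENNReal.ofReal (L.factorial * (2 : ℝ) ^ (8 * (L : ℝ))) with hCL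
  set E := CL * V ^ (1 - p.toReal⁻¹) * K1 * V ^ q.toReal⁻¹ with hE
  have hCLt : CL ≠ ⊤ := ENNReal.ofReal_ne_top
  have hV1 : V ^ (1 - p.toReal⁻¹) ≠ ⊤ := ENNReal.rpow_ne_top_of_nonneg (by linarith) hVt
  have hV2 : V ^ q.toReal⁻¹ ≠ ⊤ := ENNReal.rpow_ne_top_of_nonneg (by positivity) hVt
  have hEt : E ≠ ⊤ := by finiteness
  have hc : LpAddConst r ≠ ⊤ := (LpAddConst_lt_top r).ne
  refine ⟨LpAddConst r * (E * K4 + K2 * K3), by finiteness, fun t ht m hm hm' f hf => ?_⟩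
  rw [herzNorm_eq n ν q r hr, herzNorm_eq n μ p r₀ hr₀]
  set N := eLpNorm (hseq n μ p f) r₀ (Measure.count : Measure ℤ) with hN
  change _ ≤ _ * N
  set D := (2 : ℝ≥0∞) ^ ((m : ℝ) * (B - A)) with hDdef
  have hpt : ∀ j : ℤ, (2 : ℝ≥0∞) ^ ((j : ℝ) * ν) *
      eLpNorm ((annulus n j).indicator (heatSemigroup n t f)) q volume ≤
      (E * D * N) * wt L B (j + -m) + (K2 * D) * dseq (dexp n μ ν p q) m (hseq n μ p f) j := by
    intro j
    rw [eLpNorm_indicator_eq_eLpNorm_restrict (measurableSet_annulus n j)]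
    set W := (2 : ℝ≥0∞) ^ (-(m : ℝ) * A - (L : ℝ) * max ((j - m : ℤ) : ℝ) 0) with hW
    set c := CL * V ^ (1 - p.toReal⁻¹) * W * (K1 * N) with hcdef
    let G : ℤ → Euc n → ℝ≥0∞ := fun k x => if m < j then hop n t (pc n f k) x else 0
    have hGm : ∀ k, Measurable (G k) := by
      intro k
      by_cases hj : m < j
      · simpa [G, hj] using measurable_hop n t (measurable_pc n hf k)
      · simp [G, hj]
    have hb1 : eLpNorm (heatSemigroup n t f) q (volume.restrict (annulus n j)) ≤
        eLpNorm ((fun _ => c) + ∑ k ∈ Finset.Icc (j - 1) (j + 1), G k) q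
          (volume.restrict (annulus n j)) := by
      refine eLpNorm_mono_enorm_ae ?_
      filter_upwards [ae_restrict_mem (measurableSet_annulus n j)] with x hx
      refine (heat_pointwise n hn ht m j L hm hm' hf μ hp hx).trans ?_
      simp only [Pi.add_apply, Finset.sum_apply, enorm_eq_self, G]
      refine add_le_add ?_ le_rfl
      rw [hcdef]
      exact mul_le_mul_right (H1 m _) _
    have hb2 : eLpNorm (heatSemigroup n t f) q (volume.restrict (annulus n j)) ≤
        c * (V ^ (q.toReal⁻¹) * (2 : ℝ≥0∞) ^ ((j : ℝ) * n * q.toReal⁻¹)) +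
          ∑ k ∈ Finset.Icc (j - 1) (j + 1), eLpNorm (G k) q (volume.restrict (annulus n j)) := by
      refine hb1.trans ((eLpNorm_add_le aestronglyMeasurable_const
        (Finset.aestronglyMeasurable_sum _ fun k _ => (hGm k).aestronglyMeasurable) hq).trans ?_)
      gcongr
      · exact const_annulus_le n hn j q c
      · exact eLpNorm_sum_le (fun k _ => (hGm k).aestronglyMeasurable) hq
    calc _ ≤ (2 : ℝ≥0∞) ^ ((j : ℝ) * ν) *
          (c * (V ^ (q.toReal⁻¹) * (2 : ℝ≥0∞) ^ ((j : ℝ) * n * q.toReal⁻¹)) +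
          ∑ k ∈ Finset.Icc (j - 1) (j + 1), eLpNorm (G k) q (volume.restrict (annulus n j))) := by
          gcongr
      _ = E * N * ((2 : ℝ≥0∞) ^ ((j : ℝ) * ν) * W * (2 : ℝ≥0∞) ^ ((j : ℝ) * n * q.toReal⁻¹)) +
          ∑ k ∈ Finset.Icc (j - 1) (j + 1), (2 : ℝ≥0∞) ^ ((j : ℝ) * ν) *
            eLpNorm (G k) q (volume.restrict (annulus n j)) := by
          rw [mul_add, Finset.mul_sum]
          congr 1
          rw [hcdef, hE]
          ring
      _ ≤ (E * D * N) * wt L B (j + -m) +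
          (K2 * D) * dseq (dexp n μ ν p q) m (hseq n μ p f) j := by
          apply add_le_add
          · apply le_of_eq
            have : (2 : ℝ≥0∞) ^ ((j : ℝ) * ν) * W * (2 : ℝ≥0∞) ^ ((j : ℝ) * n * q.toReal⁻¹)
                = D * wt L B (j + -m) := by
              rw [hW, hDdef, wt, ← two_rpow_add, ← two_rpow_add, ← two_rpow_add,
                ← sub_eq_add_neg]
              congr 1
              push_cast
              rw [hBdef]
              ring
            rw [this]
            ring
          · rw [dseq, Finset.mul_sum]
            refine Finset.sum_le_sum fun k hk => ?_
            rw [Finset.mem_Icc] at hk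
            have hjk : |j - k| ≤ 1 := abs_le.2 ⟨by omega, by omega⟩
            by_cases hj : m < j
            · have hG : G k = hop n t (pc n f k) := by
                funext x
                simp [G, hj]
              rw [hG, if_pos hj, mul_assoc]
              exact H2 t ht m j k hm hjk f hf
            · have hG : G k = 0 := by
                funext x
                simp [G, hj]
              rw [hG, eLpNorm_zero, mul_zero]
              exact zero_le
  refine (seq_eLpNorm_mono hpt r).trans ((seq_eLpNorm_add _ _ r).trans ?_)
  rw [seq_eLpNorm_const_mul _ (fun j => wt L B (j + -m)) hr, seq_eLpNorm_const_mul _ _ hr,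
    seq_eLpNorm_shift _ hr]
  calc LpAddConst r * (E * D * N * eLpNorm (wt L B) r Measure.count +
        K2 * D * eLpNorm (dseq (dexp n μ ν p q) m (hseq n μ p f)) r Measure.count)
      ≤ LpAddConst r * (E * D * N * K4 + K2 * D * (K3 * N)) := by
        gcongr
        exact H3 m _
    _ = _ := by ring

/-- Smoothing estimate for the heat semigroup between Herz spaces:
`‖e^{tΔ}f‖_{K̇^ν_{q,r}} ≲ t^{-(n/2)[(μ/n + 1/p) - (ν/n + 1/q)]} ‖f‖_{K̇^μ_{p,r₀}}`. -/
theorem heatSemigroup_herz_estimate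
    (n : ℕ) (hn : 1 ≤ n) (μ ν : ℝ) (p q r r₀ : ℝ≥0∞)
    (hp : 1 ≤ p) (hq : 1 ≤ q) (hr : 0 < r) (hr₀ : 0 < r₀)
    (hμν : ν ≤ μ)
    (h0 : 0 ≤ ν / (n : ℝ) + (q⁻¹).toReal)
    (h1 : ν / (n : ℝ) + (q⁻¹).toReal ≤ μ / (n : ℝ) + (p⁻¹).toReal)
    (h2 : μ / (n : ℝ) + (p⁻¹).toReal ≤ 1)
    (h3 : μ / (n : ℝ) + (p⁻¹).toReal = 0 → r₀ = ⊤)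
    (h4 : ν / (n : ℝ) + (q⁻¹).toReal = 0 → r = ⊤)
    (hcase :
      (ν < μ ∧ p < ⊤ ∧ q < ⊤ ∧ r₀ = ⊤ ∧
        ν / (n : ℝ) + (q⁻¹).toReal < μ / (n : ℝ) + (p⁻¹).toReal ∧
        μ / (n : ℝ) + (p⁻¹).toReal < 1) ∨
      (p < ⊤ ∧ q < ⊤ ∧ r₀ ≤ r ∧ μ / (n : ℝ) + (p⁻¹).toReal < 1) ∨
      (r₀ ≤ min 1 r)) :
    ∃ C : ℝ, 0 < C ∧ ∀ t : ℝ, 0 < t → ∀ f : Euc n → ℝ, Measurable f →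
      herzNorm n ν q r (heatSemigroup n t f) ≤
        ENNReal.ofReal (C * t ^ (-((n : ℝ) / 2) *
            ((μ / (n : ℝ) + (p⁻¹).toReal) - (ν / (n : ℝ) + (q⁻¹).toReal)))) *
          herzNorm n μ p r₀ f := by

  have hn0 : (0 : ℝ) < n := by exact_mod_cast hn
  have eq1 : ∀ s i : ℝ, s / (n : ℝ) + i = (s + n * i) / n := fun s i => by field_simp
  simp only [ENNReal.toReal_inv] at *
  simp only [eq1] at *
  have h0' : 0 ≤ ν + n * q.toReal⁻¹ := by
    by_contra h
    exact absurd h0 (not_le.2 (div_neg_of_neg_of_pos (not_le.1 h) hn0))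
  have h1' : ν + n * q.toReal⁻¹ ≤ μ + n * p.toReal⁻¹ := (div_le_div_iff_of_pos_right hn0).1 h1
  have h2' : μ + n * p.toReal⁻¹ ≤ n := by simpa using (div_le_iff₀ hn0).1 h2
  have h4' : ν + n * q.toReal⁻¹ = 0 → r = ⊤ := fun h => h4 (by rw [h, zero_div])
  have hlt : (μ + n * p.toReal⁻¹) / n < 1 → 0 < n - (μ + n * p.toReal⁻¹) := fun h => by
    have := (div_lt_iff₀ hn0).1 h
    linarith
  have hA : 0 < n - (μ + n * p.toReal⁻¹) ∨ r₀ ≤ 1 := by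
    rcases hcase with h | h | h
    · exact Or.inl (hlt h.2.2.2.2.2)
    · exact Or.inl (hlt h.2.2.2)
    · exact Or.inr (h.trans (min_le_left _ _))
  have hD : 0 < dexp n μ ν p q ∨ r₀ ≤ r := by
    rcases hcase with h | h | h
    · left
      have := (div_lt_div_iff_of_pos_right hn0).1 h.2.2.2.2.1
      unfold dexp
      split_ifs
      · linarith [h.1]
      · linarith
    · exact Or.inr h.2.2.1
    · exact Or.inr (h.trans (min_le_right _ _))
  obtain ⟨K, hK, H⟩ := herz_core n hn μ ν p q r r₀ hp hq hr.ne' hr₀.ne' hμν h0' h1' h2' h4' hA hD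
  set A := μ + n * p.toReal⁻¹ with hAdef
  set B := ν + n * q.toReal⁻¹ with hBdef
  refine ⟨K.toReal * (2 : ℝ) ^ (A - B) + 1, by positivity, fun t ht f hf => ?_⟩
  have hst : 0 < √t := Real.sqrt_pos.2 ht
  have hm1 := Int.zpow_log_le_self (b := 2) (by norm_num) hst
  have hm2 := Int.lt_zpow_succ_log_self (b := 2) (by norm_num) (√t)
  push_cast at hm1 hm2
  set m := Int.log 2 (√t)
  refine (H t ht m hm1 hm2 f hf).trans ?_
  gcongr
  have hexp : -((n : ℝ) / 2) * (A / n - B / n) = (1 / 2) * (B - A) := by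
    field_simp
    ring
  rw [hexp]
  have hkey : (2 : ℝ) ^ ((m : ℝ) * (B - A)) ≤ (2 : ℝ) ^ (A - B) * t ^ ((1 / 2) * (B - A)) := by
    have e1 : t ^ ((1 / 2) * (B - A)) = (√t) ^ (B - A) := by
      rw [Real.sqrt_eq_rpow, ← Real.rpow_mul ht.le]
    rw [e1]
    calc (2 : ℝ) ^ ((m : ℝ) * (B - A)) = (2 : ℝ) ^ (A - B) * ((2 : ℝ) ^ (m + 1)) ^ (B - A) := by
          rw [← Real.rpow_intCast, ← Real.rpow_mul (by positivity), ← Real.rpow_add (by norm_num)]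
          congr 1
          push_cast
          ring
      _ ≤ _ := by
          gcongr ?_ * ?_
          exact Real.rpow_le_rpow_of_nonpos hst hm2.le (by linarith)
  have hKe : K = ENNReal.ofReal K.toReal := (ENNReal.ofReal_toReal hK).symm
  refine (mul_le_mul_left hKe.le _).trans ?_
  rw [← two_ofReal_rpow, ← ENNReal.ofReal_mul (by positivity)]
  apply ENNReal.ofReal_le_ofReal
  have hK0 : 0 ≤ K.toReal := ENNReal.toReal_nonneg
  have ht0 : 0 ≤ t ^ ((1 / 2) * (B - A)) := by positivity
  calc K.toReal * (2 : ℝ) ^ ((m : ℝ) * (B - A))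
      ≤ K.toReal * ((2 : ℝ) ^ (A - B) * t ^ ((1 / 2) * (B - A))) := by gcongr
    _ ≤ _ := by
        rw [add_mul, one_mul, mul_assoc]
        linarith
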